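/- Let X and Y be pre-ordered Banach spaces with closed cones and α, β > 0, and let X be approximately α-sum-conormal. If Y is β-normal, then B(X,Y) is αβ-normal; if Y is β-absolutely normal, then B(X,Y) is αβ-absolutely normal; if Y is β-max-normal, then B(X,Y) is αβ-max-normal; and if Y is β-sum-normal, then B(X,Y) is αβ-sum-normal. -/

import Mathlib

/-!
An operator relation such as `0 ≤ T ≤ S` passes to the values at each point `a` of the cone of `X`,
where normality of `Y` bounds `‖T a‖` by a multiple `K ‖a‖`. Decomposing an arbitrary `x` as
`a - b` with `a`, `b` in the cone and `‖a‖ + ‖b‖ < α ‖x‖ + ε` extends this to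
`‖T x‖ ≤ K (α ‖x‖ + ε)` for all `ε > 0`, hence to `‖T‖ ≤ α K`.
-/

section Normality

variable {E : Type*} [SeminormedAddCommGroup E]

/-- `α`-normality: `0 ≤ x ≤ y` implies `‖x‖ ≤ α ‖y‖`. Here, as in the definitions below, a space
is pre-ordered by a set `C` through `x ≤ y ↔ y - x ∈ C`. -/
def IsNormalCone (α : ℝ) (C : Set E) : Prop :=
  ∀ x y : E, x ∈ C → y - x ∈ C → ‖x‖ ≤ α * ‖y‖

/-- `α`-absolute normality: `±x ≤ y` implies `‖x‖ ≤ α ‖y‖`. -/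
def IsAbsNormalCone (α : ℝ) (C : Set E) : Prop :=
  ∀ x y : E, y - x ∈ C → y + x ∈ C → ‖x‖ ≤ α * ‖y‖

/-- `α`-max-normality: `z ≤ x ≤ y` implies `‖x‖ ≤ α max {‖y‖, ‖z‖}`. -/
def IsMaxNormalCone (α : ℝ) (C : Set E) : Prop :=
  ∀ x y z : E, x - z ∈ C → y - x ∈ C → ‖x‖ ≤ α * max ‖y‖ ‖z‖

/-- `α`-sum-normality: `z ≤ x ≤ y` implies `‖x‖ ≤ α (‖y‖ + ‖z‖)`. -/
def IsSumNormalCone (α : ℝ) (C : Set E) : Prop :=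
  ∀ x y z : E, x - z ∈ C → y - x ∈ C → ‖x‖ ≤ α * (‖y‖ + ‖z‖)

/-- Approximate `α`-sum-conormality: every `x` is a difference of elements `a`, `b` of `C` with
`‖a‖ + ‖b‖` exceeding `α ‖x‖` by less than any prescribed `ε > 0`. -/
def IsApproxSumConormalCone (α : ℝ) (C : Set E) : Prop :=
  ∀ x : E, ∀ ε : ℝ, 0 < ε → ∃ a ∈ C, ∃ b ∈ C, x = a - b ∧ ‖a‖ + ‖b‖ < α * ‖x‖ + ε

end Normality

/-- The cone of positive operators `B(X, Y)₊` for the cones `C` of `X` and `D` of `Y`. -/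
def positiveOperators (𝕜 : Type*) [NontriviallyNormedField 𝕜]
    {X : Type*} [SeminormedAddCommGroup X] [NormedSpace 𝕜 X]
    {Y : Type*} [SeminormedAddCommGroup Y] [NormedSpace 𝕜 Y]
    (C : Set X) (D : Set Y) : Set (X →L[𝕜] Y) :=
  {T | Set.MapsTo T C D}

namespace IsApproxSumConormalCone

variable {X Y : Type*} [SeminormedAddCommGroup X] [SeminormedAddCommGroup Y]
  {C : Set X} {D : Set Y} {α β K : ℝ}

theorem norm_map_le_of_forall_mem {F : Type*} [FunLike F X Y] [AddMonoidHomClass F X Y]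
    (hC : IsApproxSumConormalCone α C) {f : F} (hK : 0 ≤ K) (hf : ∀ a ∈ C, ‖f a‖ ≤ K * ‖a‖)
    (x : X) : ‖f x‖ ≤ K * (α * ‖x‖) := by
  refine le_mul_of_forall_lt₀ fun L hL r hr => ?_
  obtain ⟨a, ha, b, hb, hx, hab⟩ := hC x (r - α * ‖x‖) (sub_pos.mpr hr)
  have habr : ‖a‖ + ‖b‖ ≤ r := by linarith
  calc ‖f x‖ = ‖f a - f b‖ := by rw [hx, map_sub]
    _ ≤ ‖f a‖ + ‖f b‖ := norm_sub_le _ _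
    _ ≤ K * ‖a‖ + K * ‖b‖ := add_le_add (hf a ha) (hf b hb)
    _ = K * (‖a‖ + ‖b‖) := (mul_add _ _ _).symm
    _ ≤ L * r := mul_le_mul hL.le habr (by positivity) (hK.trans hL.le)

variable {𝕜 : Type*} [NontriviallyNormedField 𝕜] [NormedSpace 𝕜 X] [NormedSpace 𝕜 Y]

theorem opNorm_le_of_forall_mem (hC : IsApproxSumConormalCone α C) (hα : 0 ≤ α) {T : X →L[𝕜] Y}
    (hK : 0 ≤ K) (hT : ∀ a ∈ C, ‖T a‖ ≤ K * ‖a‖) : ‖T‖ ≤ α * K :=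
  T.opNorm_le_bound (mul_nonneg hα hK) fun x =>
    (hC.norm_map_le_of_forall_mem hK hT x).trans_eq (by ring)

theorem opNorm_le_mul_opNorm_of_forall_mem (hC : IsApproxSumConormalCone α C) (hα : 0 ≤ α)
    (hβ : 0 ≤ β) {T S : X →L[𝕜] Y} (hTS : ∀ a ∈ C, ‖T a‖ ≤ β * ‖S a‖) : ‖T‖ ≤ α * β * ‖S‖ := by
  rw [mul_assoc]
  refine hC.opNorm_le_of_forall_mem hα (by positivity) fun a ha => ?_
  calc ‖T a‖ ≤ β * ‖S a‖ := hTS a ha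
    _ ≤ β * (‖S‖ * ‖a‖) := by gcongr; exact S.le_opNorm a
    _ = β * ‖S‖ * ‖a‖ := (mul_assoc _ _ _).symm

theorem isNormalCone_positiveOperators (hC : IsApproxSumConormalCone α C) (hα : 0 ≤ α)
    (hβ : 0 ≤ β) (hD : IsNormalCone β D) :
    IsNormalCone (α * β) (positiveOperators 𝕜 C D) :=
  fun T S hT hTS => hC.opNorm_le_mul_opNorm_of_forall_mem hα hβ fun a ha =>
    hD (T a) (S a) (hT ha) (hTS ha)

theorem isAbsNormalCone_positiveOperators (hC : IsApproxSumConormalCone α C) (hα : 0 ≤ α)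
    (hβ : 0 ≤ β) (hD : IsAbsNormalCone β D) :
    IsAbsNormalCone (α * β) (positiveOperators 𝕜 C D) :=
  fun T S hsub hadd => hC.opNorm_le_mul_opNorm_of_forall_mem hα hβ fun a ha =>
    hD (T a) (S a) (hsub ha) (hadd ha)

theorem isMaxNormalCone_positiveOperators (hC : IsApproxSumConormalCone α C) (hα : 0 ≤ α)
    (hβ : 0 ≤ β) (hD : IsMaxNormalCone β D) :
    IsMaxNormalCone (α * β) (positiveOperators 𝕜 C D) := by
  intro T S U hUT hTS
  rw [mul_assoc]
  refine hC.opNorm_le_of_forall_mem hα (by positivity) fun a ha => ?_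
  calc ‖T a‖ ≤ β * max ‖S a‖ ‖U a‖ := hD (T a) (S a) (U a) (hUT ha) (hTS ha)
    _ ≤ β * max (‖S‖ * ‖a‖) (‖U‖ * ‖a‖) := by
      gcongr
      exacts [S.le_opNorm a, U.le_opNorm a]
    _ = β * max ‖S‖ ‖U‖ * ‖a‖ := by rw [← max_mul_of_nonneg _ _ (norm_nonneg a), mul_assoc]

theorem isSumNormalCone_positiveOperators (hC : IsApproxSumConormalCone α C) (hα : 0 ≤ α)
    (hβ : 0 ≤ β) (hD : IsSumNormalCone β D) :
    IsSumNormalCone (α * β) (positiveOperators 𝕜 C D) := by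
  intro T S U hUT hTS
  rw [mul_assoc]
  refine hC.opNorm_le_of_forall_mem hα (by positivity) fun a ha => ?_
  calc ‖T a‖ ≤ β * (‖S a‖ + ‖U a‖) := hD (T a) (S a) (U a) (hUT ha) (hTS ha)
    _ ≤ β * (‖S‖ * ‖a‖ + ‖U‖ * ‖a‖) := by
      gcongr
      exacts [S.le_opNorm a, U.le_opNorm a]
    _ = β * (‖S‖ + ‖U‖) * ‖a‖ := by ring

end IsApproxSumConormalCone

theorem stmt_6_general {𝕜 : Type*} [NontriviallyNormedField 𝕜]
    {X : Type*} [SeminormedAddCommGroup X] [NormedSpace 𝕜 X]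
    {Y : Type*} [SeminormedAddCommGroup Y] [NormedSpace 𝕜 Y]
    {C : Set X} {D : Set Y} {α β : ℝ} (hα : 0 ≤ α) (hβ : 0 ≤ β)
    (hC : IsApproxSumConormalCone α C) :
    (IsNormalCone β D → IsNormalCone (α * β) (positiveOperators 𝕜 C D))
    ∧ (IsAbsNormalCone β D → IsAbsNormalCone (α * β) (positiveOperators 𝕜 C D))
    ∧ (IsMaxNormalCone β D → IsMaxNormalCone (α * β) (positiveOperators 𝕜 C D))
    ∧ (IsSumNormalCone β D → IsSumNormalCone (α * β) (positiveOperators 𝕜 C D)) :=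
  ⟨hC.isNormalCone_positiveOperators hα hβ, hC.isAbsNormalCone_positiveOperators hα hβ,
    hC.isMaxNormalCone_positiveOperators hα hβ, hC.isSumNormalCone_positiveOperators hα hβ⟩

/-- If `X` is approximately `α`-sum-conormal, then: `Y` `β`-normal implies
`B(X,Y)` `αβ`-normal; `Y` `β`-absolutely normal implies `B(X,Y)` `αβ`-absolutely normal;
`Y` `β`-max-normal implies `B(X,Y)` `αβ`-max-normal; and `Y` `β`-sum-normal implies
`B(X,Y)` `αβ`-sum-normal. -/
theorem stmt_6
    {X : Type*} [NormedAddCommGroup X] [NormedSpace ℝ X] [CompleteSpace X]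
    {Y : Type*} [NormedAddCommGroup Y] [NormedSpace ℝ Y] [CompleteSpace Y]
    (Cx : Set X) (hCx_closed : IsClosed Cx)
    (hCx_add : ∀ a ∈ Cx, ∀ b ∈ Cx, a + b ∈ Cx)
    (hCx_smul : ∀ r : ℝ, 0 ≤ r → ∀ a ∈ Cx, r • a ∈ Cx)
    (Cy : Set Y) (hCy_closed : IsClosed Cy)
    (hCy_add : ∀ a ∈ Cy, ∀ b ∈ Cy, a + b ∈ Cy)
    (hCy_smul : ∀ r : ℝ, 0 ≤ r → ∀ a ∈ Cy, r • a ∈ Cy)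
    (α β : ℝ) (hα : 0 < α) (hβ : 0 < β)
    (hXsumconormal : ∀ x : X, ∀ ε : ℝ, 0 < ε →
      ∃ a ∈ Cx, ∃ b ∈ Cx, x = a - b ∧ ‖a‖ + ‖b‖ < α * ‖x‖ + ε) :
    ((∀ x y : Y, x ∈ Cy → y - x ∈ Cy → ‖x‖ ≤ β * ‖y‖) →
      ∀ T S : X →L[ℝ] Y, (∀ x ∈ Cx, T x ∈ Cy) → (∀ x ∈ Cx, (S - T) x ∈ Cy) →
        ‖T‖ ≤ α * β * ‖S‖)
    ∧ ((∀ x y : Y, y - x ∈ Cy → y + x ∈ Cy → ‖x‖ ≤ β * ‖y‖) →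
      ∀ T S : X →L[ℝ] Y, (∀ x ∈ Cx, (S - T) x ∈ Cy) → (∀ x ∈ Cx, (S + T) x ∈ Cy) →
        ‖T‖ ≤ α * β * ‖S‖)
    ∧ ((∀ x y z : Y, x - z ∈ Cy → y - x ∈ Cy → ‖x‖ ≤ β * max ‖y‖ ‖z‖) →
      ∀ T S U : X →L[ℝ] Y, (∀ x ∈ Cx, (T - U) x ∈ Cy) → (∀ x ∈ Cx, (S - T) x ∈ Cy) →
        ‖T‖ ≤ α * β * max ‖S‖ ‖U‖)
    ∧ ((∀ x y z : Y, x - z ∈ Cy → y - x ∈ Cy → ‖x‖ ≤ β * (‖y‖ + ‖z‖)) →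
      ∀ T S U : X →L[ℝ] Y, (∀ x ∈ Cx, (T - U) x ∈ Cy) → (∀ x ∈ Cx, (S - T) x ∈ Cy) →
        ‖T‖ ≤ α * β * (‖S‖ + ‖U‖)) :=
  stmt_6_general hα.le hβ.le hXsumconormal
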